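/- arXiv:1903.09869 — 4 statements merged into one kernel-verified Lean document; each statement's English description precedes it below -/
import Mathlib

section
/- Let (s_t)_{t∈ℕ} be a sequence of non-negative real numbers such that the Cesàro averages S_T := (1/T) ∑_{t=1}^T s_t converge to 0 as T → ∞. Then s_t converges to 0 with increasing permanence. -/
/-- Convergence with increasing permanence (i.p.) of a real sequence to `s'`. -/
def ConvIP (s : ℕ → ℝ) (s' : ℝ) : Prop :=
  ∀ ε > 0, ∀ D N : ℕ, ∃ n, N ≤ n ∧ ∀ i, 1 ≤ i → i ≤ D → |s' - s (n + i)| ≤ ε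

/-!
If the sequence `|s' - s t|` does not have arbitrarily late windows of length `D` on which it is at
most `ε`, then from some `N` on each window of length `D` contributes at least `ε` to its partial
sums. There are about `T / D` disjoint windows below `T`, so the Cesàro averages are asymptotically
at least `ε / D` and cannot accumulate at `0`.
-/

open Filter Finset Topology

section Windows

variable {N D : ℕ}

theorem nsmul_le_sum_Ioc_of_forall_exists_mem_window {M : Type*} [AddCommMonoid M] [PartialOrder M]
    [IsOrderedAddMonoid M] {f : ℕ → M} {ε : M} (hf : ∀ t, 0 ≤ f t)
    (hwindow : ∀ n ≥ N, ∃ t ∈ Ioc n (n + D), ε ≤ f t) (k : ℕ) :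
    k • ε ≤ ∑ t ∈ Ioc N (N + k * D), f t := by
  induction k with
  | zero => simp
  | succ k ih =>
    obtain ⟨t, ht, hεt⟩ := hwindow (N + k * D) (Nat.le_add_right _ _)
    have hlast : ε ≤ ∑ t ∈ Ioc (N + k * D) (N + k * D + D), f t :=
      hεt.trans (single_le_sum (fun t _ ↦ hf t) ht)
    calc (k + 1) • ε = k • ε + ε := succ_nsmul ε k
      _ ≤ ∑ t ∈ Ioc N (N + k * D), f t + ∑ t ∈ Ioc (N + k * D) (N + k * D + D), f t :=
        add_le_add ih hlast
      _ = ∑ t ∈ Ioc N (N + k * D + D), f t :=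
        sum_Ioc_consecutive f (Nat.le_add_right _ _) (Nat.le_add_right _ _)
      _ = ∑ t ∈ Ioc N (N + (k + 1) * D), f t := by rw [add_one_mul, add_assoc]

theorem mul_sub_le_mul_sum_Icc_of_forall_exists_mem_window {R : Type*} [CommRing R]
    [PartialOrder R] [IsOrderedRing R] {f : ℕ → R} {ε : R} (hf : ∀ t, 0 ≤ f t) (hε : 0 ≤ ε)
    (hwindow : ∀ n ≥ N, ∃ t ∈ Ioc n (n + D), ε ≤ f t) {T : ℕ} (hT : N ≤ T) :
    ε * (T - (N + D)) ≤ D * ∑ t ∈ Icc 1 T, f t := by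
  have hD : 0 < D := by
    obtain ⟨t, ht, -⟩ := hwindow N le_rfl
    rw [mem_Ioc] at ht
    omega
  obtain ⟨k, hkT, hTk⟩ : ∃ k, N + k * D ≤ T ∧ T ≤ k * D + (N + D) := by
    have hle := Nat.div_mul_le_self (T - N) D
    have hlt := Nat.lt_div_mul_add (a := T - N) hD
    exact ⟨(T - N) / D, by omega, by omega⟩
  have hsubset : Ioc N (N + k * D) ⊆ Icc 1 T := fun t ht ↦ by
    rw [mem_Ioc] at ht
    rw [mem_Icc]
    omega
  calc ε * (T - (N + D)) ≤ ε * (k * D) := by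
        gcongr
        rw [sub_le_iff_le_add]
        exact_mod_cast Nat.mono_cast (α := R) hTk
    _ = D * k • ε := by rw [nsmul_eq_mul]; ring
    _ ≤ D * ∑ t ∈ Ioc N (N + k * D), f t := by
        gcongr
        exact nsmul_le_sum_Ioc_of_forall_exists_mem_window hf hwindow k
    _ ≤ D * ∑ t ∈ Icc 1 T, f t := by
        gcongr
        exact fun t _ _ ↦ hf t

theorem eventually_lt_mul_average_of_forall_exists_mem_window {f : ℕ → ℝ} {ε a : ℝ}
    (hf : ∀ t, 0 ≤ f t) (hε : 0 ≤ ε) (hwindow : ∀ n ≥ N, ∃ t ∈ Ioc n (n + D), ε ≤ f t)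
    (ha : a < ε) :
    ∀ᶠ T : ℕ in atTop, a < D * (1 / (T : ℝ) * ∑ t ∈ Icc 1 T, f t) := by
  have hlim : Tendsto (fun T : ℕ ↦ ε * (1 - (N + D : ℝ) / T)) atTop (𝓝 ε) := by
    simpa using ((tendsto_const_div_atTop_nhds_zero_nat (N + D : ℝ)).const_sub 1).const_mul ε
  filter_upwards [hlim.eventually_const_lt ha, eventually_ge_atTop N, eventually_gt_atTop 0]
    with T haT hNT hT
  calc a < ε * (1 - (N + D : ℝ) / T) := haT
    _ = 1 / (T : ℝ) * (ε * (T - (N + D))) := by field_simp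
    _ ≤ 1 / (T : ℝ) * (D * ∑ t ∈ Icc 1 T, f t) := by
        gcongr ?_ * ?_
        exact mul_sub_le_mul_sum_Icc_of_forall_exists_mem_window hf hε hwindow hNT
    _ = D * (1 / (T : ℝ) * ∑ t ∈ Icc 1 T, f t) := mul_left_comm _ _ _

end Windows

theorem exists_forall_exists_mem_window_of_not_convIP {s : ℕ → ℝ} {s' : ℝ} (h : ¬ConvIP s s') :
    ∃ ε > 0, ∃ D N : ℕ, ∀ n ≥ N, ∃ t ∈ Ioc n (n + D), ε ≤ |s' - s t| := by
  unfold ConvIP at h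
  push Not at h
  obtain ⟨ε, hε, D, N, hfar⟩ := h
  refine ⟨ε, hε, D, N, fun n hn ↦ ?_⟩
  obtain ⟨i, hi, hiD, hεi⟩ := hfar n hn
  exact ⟨n + i, mem_Ioc.2 ⟨by omega, by omega⟩, hεi.le⟩

theorem cesaro_to_zero_implies_convIP_general (s : ℕ → ℝ) (s' : ℝ)
    (h : MapClusterPt 0 atTop fun T : ℕ ↦ 1 / (T : ℝ) * ∑ t ∈ Icc 1 T, |s' - s t|) :
    ConvIP s s' := by
  by_contra hs
  obtain ⟨ε, hε, D, N, hwindow⟩ := exists_forall_exists_mem_window_of_not_convIP hs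
  have hlarge : ∀ᶠ T : ℕ in atTop, ε / 2 < D * (1 / (T : ℝ) * ∑ t ∈ Icc 1 T, |s' - s t|) :=
    eventually_lt_mul_average_of_forall_exists_mem_window (fun _ ↦ abs_nonneg _) hε.le hwindow
      (half_lt_self hε)
  have hsmall : ∃ᶠ T : ℕ in atTop, D * (1 / (T : ℝ) * ∑ t ∈ Icc 1 T, |s' - s t|) < ε / 2 := by
    have hnhds : ∀ᶠ x : ℝ in 𝓝 0, D * x < ε / 2 :=
      (continuous_const_mul (D : ℝ)).continuousAt.eventually_lt_const (by simpa using hε)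
    exact h.frequently hnhds
  obtain ⟨T, hT_small, hT_large⟩ := (hsmall.and_eventually hlarge).exists
  exact hT_small.not_gt hT_large

/-- If the Cesàro averages of a non-negative real sequence converge to 0,
then the sequence converges to 0 with increasing permanence. -/
theorem cesaro_to_zero_implies_convIP (s : ℕ → ℝ) (hs : ∀ t, 0 ≤ s t)
    (h : Filter.Tendsto (fun T : ℕ => (1 / (T : ℝ)) * ∑ t ∈ Finset.Icc 1 T, s t)
      Filter.atTop (nhds 0)) :
    ConvIP s 0 :=
  cesaro_to_zero_implies_convIP_general s 0 <| by
    simpa only [zero_sub, abs_neg, abs_of_nonneg (hs _)] using h.mapClusterPt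
end

section
/- Define the real sequence (q_t)_{t∈ℕ} by q_t = 1 if t is a power of 2 (t = 2^n for some n ∈ ℕ) and q_t = 1/t² otherwise. Then q_t converges to 0 with increasing permanence. -/
/-!
Past `b ^ k` the next power of `b` is at least `b ^ k` further away, so the powers of `b` leave
arbitrarily long gaps arbitrarily far out. On a long gap far enough out, the sequence agrees with
a convergent one and is therefore uniformly close to its limit.
-/

open Filter Set Topology

/-- A set of natural numbers has unbounded gaps if arbitrarily far out there are arbitrarily long
intervals disjoint from it; the interval `{n + 1, …, n + D}` is indexed as in `ConvIP`. -/
def HasUnboundedGaps (S : Set ℕ) : Prop :=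
  ∀ D N : ℕ, ∃ n, N ≤ n ∧ ∀ i, 1 ≤ i → i ≤ D → n + i ∉ S

theorem HasUnboundedGaps.convIP {S : Set ℕ} {s : ℕ → ℝ} {l : ℝ} (hS : HasUnboundedGaps S)
    (hs : Tendsto s (atTop ⊓ 𝓟 Sᶜ) (𝓝 l)) : ConvIP s l := by
  intro ε hε D N
  have hclose : ∀ᶠ t in atTop, t ∈ Sᶜ → |s t - l| < ε :=
    eventually_inf_principal.1 (hs.eventually (eventually_abs_sub_lt l hε))
  obtain ⟨T, hT⟩ := eventually_atTop.1 hclose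
  obtain ⟨n, hn, hgap⟩ := hS D (max T N)
  refine ⟨n, (le_max_right T N).trans hn, fun i hi hiD ↦ ?_⟩
  have hTi : T ≤ n + i := (le_max_left T N).trans (hn.trans (Nat.le_add_right n i))
  rw [abs_sub_comm]
  exact (hT (n + i) hTi (hgap i hi hiD)).le

theorem hasUnboundedGaps_range {f : ℕ → ℕ} (hf : Monotone f)
    (hgap : Tendsto (fun k ↦ f (k + 1) - f k) atTop atTop) : HasUnboundedGaps (range f) := by
  intro D N
  have hf_atTop : Tendsto f atTop atTop :=
    (tendsto_add_atTop_iff_nat 1).1 (tendsto_atTop_mono (fun _ ↦ Nat.sub_le _ _) hgap)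
  obtain ⟨k, hN, hD⟩ :=
    ((hf_atTop.eventually_ge_atTop N).and (hgap.eventually_gt_atTop D)).exists
  refine ⟨f k, hN, ?_⟩
  rintro i hi hiD ⟨a, ha⟩
  exact hf.ne_of_lt_of_lt_nat k (by omega) (by omega) a ha

theorem hasUnboundedGaps_range_pow {b : ℕ} (hb : 1 < b) :
    HasUnboundedGaps (range fun n : ℕ ↦ b ^ n) := by
  refine hasUnboundedGaps_range (pow_right_mono₀ hb.le) ?_
  refine tendsto_atTop_mono (fun k ↦ ?_) (tendsto_pow_atTop_atTop_of_one_lt hb)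
  calc b ^ k ≤ b ^ k * (b - 1) := Nat.le_mul_of_pos_right _ (Nat.sub_pos_of_lt hb)
    _ = b ^ (k + 1) - b ^ k := by rw [Nat.mul_sub_one, pow_succ]

theorem power_of_two_sequence_convIP_general {b : ℕ} (hb : 1 < b) {q u : ℕ → ℝ} {l : ℝ}
    (hu : Tendsto u atTop (𝓝 l)) (hqu : EqOn q u (range fun n : ℕ ↦ b ^ n)ᶜ) : ConvIP q l := by
  have hq : u =ᶠ[atTop ⊓ 𝓟 (range fun n : ℕ ↦ b ^ n)ᶜ] q :=
    hqu.symm.eventuallyEq.filter_mono inf_le_right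
  exact (hasUnboundedGaps_range_pow hb).convIP ((hu.mono_left inf_le_left).congr' hq)

/-- The sequence `q` with `q t = 1` if `t` is a power of 2 and `q t = 1/t²` otherwise
converges to 0 with increasing permanence. -/
theorem power_of_two_sequence_convIP (q : ℕ → ℝ)
    (h1 : ∀ t : ℕ, (∃ n : ℕ, t = 2 ^ n) → q t = 1)
    (h2 : ∀ t : ℕ, (¬ ∃ n : ℕ, t = 2 ^ n) → q t = 1 / (t : ℝ) ^ 2) :
    ConvIP q 0 := by
  exact power_of_two_sequence_convIP_general one_lt_two (tendsto_const_div_pow 1 2 two_ne_zero)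
    fun t ht ↦ h2 t fun ⟨n, hn⟩ ↦ ht ⟨n, hn.symm⟩
end

section
/- Let (X, ‖·‖) be a normed vector space and φ : X → X a contraction with fixed point x* ∈ X and Lipschitz constant λ < 1 (relative to the metric induced by the norm). Let (y_t)_{t∈ℕ}, (d_t)_{t∈ℕ} be sequences in X satisfying y_{t+1} = φ(y_t) + d_t for all t, and assume the disturbances are bounded: there exists b such that ‖d_t‖ ≤ b for all t. Let r ≥ 0. If ‖d_t‖ converges with increasing permanence to the interval [0, r], then ‖y_t − x*‖ converges with increasing permanence to the interval [0, r/(1 − λ)]. -/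
/-- A nonnegative real sequence converges with increasing permanence to the interval `[0, r]`:
for every `ε > 0` and all `D, N` there is `n ≥ N` with `s (n + i) ≤ r + ε` for `i = 1, …, D`. -/
def ConvIPToInterval (s : ℕ → ℝ) (r : ℝ) : Prop :=
  ∀ ε > 0, ∀ D N : ℕ, ∃ n, N ≤ n ∧ ∀ i, 1 ≤ i → i ≤ D → s (n + i) ≤ r + ε

/-!
The errors `u t = dist (y t) x*` satisfy `u (t + 1) ≤ lam * u t + e t`, where `e t` is the size of
the disturbance. As long as `e ≤ s`, the excess of `u` over `s / (1 - lam)`, the fixed point of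
`x ↦ lam * x + s`, shrinks by the factor `lam` at each step. Bounded disturbances therefore give
bounded errors, so the number `K` of steps needed to shrink the excess below a given tolerance does
not depend on where one starts. On a window of length `K + D` on which the disturbances are almost
at most `r`, the last `D` errors are then almost at most `r / (1 - lam)`.
-/

open Filter Set Topology

theorem convIPToInterval_iff_forall_lt {s : ℕ → ℝ} {r : ℝ} :
    ConvIPToInterval s r ↔ ∀ ε > 0, ∀ D N : ℕ, ∃ n ≥ N, ∀ i < D, s (n + i) ≤ r + ε := by
  constructor <;> intro h ε hε D N
  · obtain ⟨n, hn, hs⟩ := h ε hε D N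
    refine ⟨n + 1, by omega, fun i hi => ?_⟩
    simpa only [add_assoc, add_comm 1 i] using hs (i + 1) (by omega) (by omega)
  · obtain ⟨n, hn, hs⟩ := h ε hε (D + 1) N
    exact ⟨n, hn, fun i _ hi => hs i (by omega)⟩

section AffineRecursion

variable {u e : ℕ → ℝ} {lam : ℝ}

theorem le_div_one_sub_add_pow_mul_of_le_mul_add {s : ℝ} (hlam0 : 0 ≤ lam) (hlam1 : lam ≠ 1) (n : ℕ)
    (hu : ∀ k < n, u (k + 1) ≤ lam * u k + s) :
    u n ≤ s / (1 - lam) + lam ^ n * (u 0 - s / (1 - lam)) := by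
  set c := s / (1 - lam) with hc
  have fixed_point : lam * c + s = c := by
    have : 1 - lam ≠ 0 := sub_ne_zero.mpr hlam1.symm
    rw [hc]
    field_simp
    ring
  have contract : ∀ k < n, u (k + 1) - c ≤ lam * (u k - c) := fun k hk => by
    linarith [hu k hk]
  linarith [le_geom (u := fun k => u k - c) hlam0 n contract]

theorem bddAbove_range_of_le_mul_add (hlam0 : 0 ≤ lam) (hlam1 : lam < 1)
    (hu : ∀ t, u (t + 1) ≤ lam * u t + e t) (he : BddAbove (range e)) :
    BddAbove (range u) := by
  obtain ⟨b, hb⟩ := he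
  refine ⟨b / (1 - lam) + |u 0 - b / (1 - lam)|, forall_mem_range.mpr fun n => ?_⟩
  calc u n ≤ b / (1 - lam) + lam ^ n * (u 0 - b / (1 - lam)) :=
        le_div_one_sub_add_pow_mul_of_le_mul_add hlam0 hlam1.ne n fun k _ =>
          (hu k).trans (by gcongr; exact hb (mem_range_self k))
    _ ≤ b / (1 - lam) + lam ^ n * |u 0 - b / (1 - lam)| := by gcongr; exact le_abs_self _
    _ ≤ b / (1 - lam) + |u 0 - b / (1 - lam)| := by
        gcongr
        exact mul_le_of_le_one_left (abs_nonneg _) (pow_le_one₀ hlam0 hlam1.le)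

theorem ConvIPToInterval.of_le_mul_add {r : ℝ} (hlam0 : 0 ≤ lam) (hlam1 : lam < 1)
    (hu : ∀ t, u (t + 1) ≤ lam * u t + e t) (he_bdd : BddAbove (range e))
    (he : ConvIPToInterval e r) : ConvIPToInterval u (r / (1 - lam)) := by
  obtain ⟨M, hM⟩ := bddAbove_range_of_le_mul_add hlam0 hlam1 hu he_bdd
  rw [convIPToInterval_iff_forall_lt] at he ⊢
  intro ε hε D N
  have one_sub_pos : 0 < 1 - lam := sub_pos.mpr hlam1
  set δ := ε / 2 * (1 - lam) with hδ
  set c := (r + δ) / (1 - lam) with hc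
  have hc_eq : c = r / (1 - lam) + ε / 2 := by
    rw [hc, hδ, add_div, mul_div_cancel_right₀ _ one_sub_pos.ne']
  have excess_tendsto : Tendsto (fun k : ℕ => lam ^ k * (M - c)) atTop (𝓝 0) := by
    simpa only [zero_mul] using
      (tendsto_pow_atTop_nhds_zero_of_lt_one hlam0 hlam1).mul_const (M - c)
  obtain ⟨K, hK⟩ := eventually_atTop.mp (excess_tendsto.eventually_le_const (half_pos hε))
  obtain ⟨n, hn, hen⟩ := he δ (by positivity) (K + D) N
  refine ⟨n + K, by omega, fun i hi => ?_⟩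
  calc u (n + K + i) = u (n + (K + i)) := by rw [add_assoc]
    _ ≤ c + lam ^ (K + i) * (u n - c) :=
        le_div_one_sub_add_pow_mul_of_le_mul_add (u := fun k => u (n + k)) hlam0 hlam1.ne (K + i)
          fun k hk => (hu (n + k)).trans (by gcongr; exact hen k (by omega))
    _ ≤ c + lam ^ (K + i) * (M - c) := by gcongr; exact hM (mem_range_self n)
    _ ≤ c + ε / 2 := by gcongr; exact hK (K + i) (by omega)
    _ = r / (1 - lam) + ε := by rw [hc_eq]; ring

end AffineRecursion

theorem contraction_disturbed_convIP_general {X : Type*} [PseudoMetricSpace X] {φ : X → X}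
    {lam : ℝ} (hlam0 : 0 ≤ lam) (hlam1 : lam < 1) {xstar : X}
    (hφ : ∀ a, dist (φ a) xstar ≤ lam * dist a xstar) {y : ℕ → X} {b : ℝ}
    (hb : ∀ t, dist (y (t + 1)) (φ (y t)) ≤ b) {r : ℝ}
    (hd : ConvIPToInterval (fun t => dist (y (t + 1)) (φ (y t))) r) :
    ConvIPToInterval (fun t => dist (y t) xstar) (r / (1 - lam)) := by
  have error_step (t : ℕ) :
      dist (y (t + 1)) xstar ≤ lam * dist (y t) xstar + dist (y (t + 1)) (φ (y t)) := by
    linarith [dist_triangle (y (t + 1)) (φ (y t)) xstar, hφ (y t)]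
  exact .of_le_mul_add hlam0 hlam1 error_step ⟨b, forall_mem_range.mpr hb⟩ hd

/-- Disturbed contraction dynamics: if the norms of the disturbances converge with
increasing permanence to `[0, r]`, then the distances of the iterates to the fixed point
converge with increasing permanence to `[0, r / (1 - λ)]`. -/
theorem contraction_disturbed_convIP {X : Type*} [NormedAddCommGroup X] [NormedSpace ℝ X]
    (φ : X → X) (lam : ℝ) (hlam0 : 0 ≤ lam) (hlam1 : lam < 1)
    (hlip : ∀ a b : X, ‖φ a - φ b‖ ≤ lam * ‖a - b‖)
    (xstar : X) (hfix : φ xstar = xstar)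
    (y d : ℕ → X) (hrec : ∀ t : ℕ, y (t + 1) = φ (y t) + d t)
    (b : ℝ) (hb : ∀ t, ‖d t‖ ≤ b)
    (r : ℝ) (hr : 0 ≤ r)
    (hd : ConvIPToInterval (fun t => ‖d t‖) r) :
    ConvIPToInterval (fun t => ‖y t - xstar‖) (r / (1 - lam)) := by
  simpa [hrec, dist_eq_norm] using contraction_disturbed_convIP_general (y := y) (b := b) (r := r)
    hlam0 hlam1 (by simpa [hfix, dist_eq_norm] using (hlip · xstar)) (by simpa [hrec] using hb)
    (by simpa [hrec] using hd)
end

section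
/- Let Θ be a set (the parameter space) and (ℓ_t)_{t∈ℕ} a sequence of non-negative stage loss functions ℓ_t : Θ → ℝ_{≥0} such that there exists θ* ∈ Θ with ℓ_t(θ*) = 0 for all t (the prediction model class is sufficiently expressive: min_θ ℓ_t(θ) = 0 for all t). Suppose the parameters (θ_t)_{t∈ℕ} are chosen by a no-external-regret algorithm, i.e. there exists a function Δ : ℕ → ℝ with Δ(T)/T → 0 as T → ∞ such that for all T: ∑_{t=1}^T ℓ_t(θ_t) − inf_{θ∈Θ} ∑_{t=1}^T ℓ_t(θ) ≤ Δ(T). Then the online prediction losses vanish with increasing permanence: ℓ_t(θ_t) ⇝ 0 as t → ∞. -/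
/-!
Since `θstar` has zero cumulative loss, the regret equals the cumulative loss, so the average loss
tends to zero. If some window length `D` and threshold `ε` violated increasing permanence, then
every window of length `D` beyond some stage would contain a loss exceeding `ε`. As disjoint windows
contribute separately, the cumulative loss would grow at least linearly, a contradiction.
-/

open Filter Finset Topology

theorem iInf_sum_eq_zero_of_common_zero {ι Θ M : Type*} [AddCommMonoid M]
    [ConditionallyCompleteLattice M] [IsOrderedAddMonoid M] {ℓ : ι → Θ → M} {S : Finset ι}
    (hnn : ∀ t ∈ S, ∀ θ, 0 ≤ ℓ t θ) {θstar : Θ} (hstar : ∀ t ∈ S, ℓ t θstar = 0) :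
    ⨅ θ, ∑ t ∈ S, ℓ t θ = 0 := by
  refine IsLeast.csInf_eq ⟨⟨θstar, sum_eq_zero hstar⟩, ?_⟩
  rintro _ ⟨θ, rfl⟩
  exact sum_nonneg fun t ht => hnn t ht θ

theorem nsmul_le_sum_Ioc_of_forall_exists_le {M : Type*} [AddCommMonoid M] [PartialOrder M]
    [IsOrderedAddMonoid M] {u : ℕ → M} (hu : ∀ t, 0 ≤ u t) {ε : M} {D N : ℕ}
    (hwindow : ∀ n ≥ N, ∃ t ∈ Ioc n (n + D), ε ≤ u t) (k : ℕ) :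
    k • ε ≤ ∑ t ∈ Ioc N (N + k * D), u t := by
  induction k with
  | zero => simp
  | succ k ih =>
    obtain ⟨t, ht, hεt⟩ := hwindow (N + k * D) (Nat.le_add_right _ _)
    calc (k + 1) • ε = k • ε + ε := succ_nsmul ε k
      _ ≤ ∑ t ∈ Ioc N (N + k * D), u t + ∑ t ∈ Ioc (N + k * D) (N + k * D + D), u t :=
        add_le_add ih (hεt.trans (single_le_sum (fun i _ => hu i) ht))
      _ = ∑ t ∈ Ioc N (N + (k + 1) * D), u t := by
        rw [sum_Ioc_consecutive u (Nat.le_add_right _ _) (Nat.le_add_right _ _), add_assoc,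
          ← Nat.succ_mul]

theorem exists_pos_eventually_mul_le_sum_Icc_of_forall_exists_le {K : Type*} [Field K]
    [LinearOrder K] [IsStrictOrderedRing K] {u : ℕ → K} (hu : ∀ t, 0 ≤ u t) {ε : K} (hε : 0 < ε)
    {D N : ℕ} (hwindow : ∀ n ≥ N, ∃ t ∈ Ioc n (n + D), ε ≤ u t) :
    ∃ c > 0, ∀ᶠ T : ℕ in atTop, c * T ≤ ∑ t ∈ Icc 1 T, u t := by
  refine ⟨ε / (2 * (D + 1)), by positivity, ?_⟩
  filter_upwards [eventually_ge_atTop ((N + 1) * (D + 1))] with T hT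
  -- Dividing by `D + 1` rather than `D` leaves room for the initial segment of length `N`.
  set k := T / (D + 1)
  have hNk : N + 1 ≤ k := (Nat.le_div_iff_mul_le D.succ_pos).2 hT
  have hkT : k * (D + 1) ≤ T := Nat.div_mul_le_self T (D + 1)
  have hTk : T ≤ k * (2 * (D + 1)) := by
    have : T < (k + 1) * (D + 1) := Nat.lt_mul_of_div_lt k.lt_succ_self D.succ_pos
    nlinarith
  have hsub : Ioc N (N + k * D) ⊆ Icc 1 T := fun t ht => by
    rw [mem_Ioc] at ht
    rw [mem_Icc]
    constructor <;> linarith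
  calc ε / (2 * (D + 1)) * T ≤ ε / (2 * (D + 1)) * (k * (2 * (D + 1))) := by
        gcongr
        exact_mod_cast hTk
    _ = k • ε := by rw [nsmul_eq_mul]; field_simp
    _ ≤ ∑ t ∈ Ioc N (N + k * D), u t := nsmul_le_sum_Ioc_of_forall_exists_le hu hwindow k
    _ ≤ ∑ t ∈ Icc 1 T, u t := sum_le_sum_of_subset_of_nonneg hsub fun t _ _ => hu t

theorem convIP_of_frequently_sum_abs_sub_lt {s : ℕ → ℝ} {s' : ℝ}
    (h : ∀ c > 0, ∃ᶠ T : ℕ in atTop, ∑ t ∈ Icc 1 T, |s' - s t| < c * T) : ConvIP s s' := by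
  intro ε hε D N
  by_contra! hfail
  have hwindow : ∀ n ≥ N, ∃ t ∈ Ioc n (n + D), ε ≤ |s' - s t| := fun n hn => by
    obtain ⟨i, hi, hiD, hεi⟩ := hfail n hn
    exact ⟨n + i, mem_Ioc.2 ⟨by lia, by lia⟩, hεi.le⟩
  obtain ⟨c, hc, hlinear⟩ :=
    exists_pos_eventually_mul_le_sum_Icc_of_forall_exists_le (fun t => abs_nonneg _) hε hwindow
  obtain ⟨T, hlt, hle⟩ := ((h c hc).and_eventually hlinear).exists
  exact hlt.not_ge hle

theorem convIP_of_tendsto_average_abs_sub {s : ℕ → ℝ} {s' : ℝ}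
    (h : Tendsto (fun T : ℕ => (∑ t ∈ Icc 1 T, |s' - s t|) / T) atTop (𝓝 0)) : ConvIP s s' := by
  refine convIP_of_frequently_sum_abs_sub_lt fun c hc => Eventually.frequently ?_
  filter_upwards [h.eventually_lt_const hc, eventually_gt_atTop 0] with T hT hTpos
  exact (div_lt_iff₀ (Nat.cast_pos.2 hTpos)).1 hT

/-- No-regret online learning with a sufficiently expressive model class: the online
prediction losses vanish with increasing permanence. -/
theorem no_regret_losses_convIP {Θ : Type*} (ℓ : ℕ → Θ → ℝ)
    (hnn : ∀ t θ', 0 ≤ ℓ t θ')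
    (θstar : Θ) (hstar : ∀ t, ℓ t θstar = 0)
    (θ : ℕ → Θ) (Δ : ℕ → ℝ)
    (hΔ : Filter.Tendsto (fun T : ℕ => Δ T / T) Filter.atTop (nhds 0))
    (hregret : ∀ T : ℕ,
      ∑ t ∈ Finset.Icc 1 T, ℓ t (θ t) - ⨅ θ' : Θ, ∑ t ∈ Finset.Icc 1 T, ℓ t θ' ≤ Δ T) :
    ConvIP (fun t => ℓ t (θ t)) 0 := by
  have hloss : ∀ T : ℕ, ∑ t ∈ Icc 1 T, ℓ t (θ t) ≤ Δ T := fun T => by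
    have hinf : ⨅ θ' : Θ, ∑ t ∈ Icc 1 T, ℓ t θ' = 0 :=
      iInf_sum_eq_zero_of_common_zero (fun t _ => hnn t) fun t _ => hstar t
    simpa only [hinf, sub_zero] using hregret T
  apply convIP_of_tendsto_average_abs_sub
  simp only [zero_sub, abs_neg, abs_of_nonneg (hnn _ _)]
  refine squeeze_zero (fun T => ?_) (fun T => ?_) hΔ
  · exact div_nonneg (sum_nonneg fun t _ => hnn t (θ t)) T.cast_nonneg
  · exact div_le_div_of_nonneg_right (hloss T) T.cast_nonneg
end
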